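/- Let (u, p) be a smooth (C^∞) solution of the steady incompressible Euler equations on U with u₁ > 0 everywhere (so B − p = |u|²/2 > 0). Then the quantity W satisfies D(W/G) + (1/(2(B − p)²)) · [(1, β₂, β₃)·(∇p × ∇B)] = 0 on U, where ∇p × ∇B denotes the cross product of the gradients of p and B. In particular, if B is constant on U then D(W/G) = 0. -/

import Mathlib

/-- Partial derivative in direction `i` of a scalar function on `ℝ³`. -/
noncomputable def pd (i : Fin 3) (f : (Fin 3 → ℝ) → ℝ) (x : Fin 3 → ℝ) : ℝ :=
  fderiv ℝ f x (Pi.single i 1)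

/-- The operator `D = ∂₁ + β₂ ∂₂ + β₃ ∂₃`. -/
noncomputable def Dop (β₂ β₃ : (Fin 3 → ℝ) → ℝ) (f : (Fin 3 → ℝ) → ℝ) (x : Fin 3 → ℝ) : ℝ :=
  pd 0 f x + β₂ x * pd 1 f x + β₃ x * pd 2 f x

/-!
Let `α = v · curl v / |v|²`, and let `v` be an incompressible Euler flow with Bernoulli function
`B`. The momentum equation says `∇B = v × curl v`, so expanding `v × (v × curl v)` gives
`α v = curl v + |v|⁻² (v × ∇B)`. Taking divergences, with `div v = 0`, `div curl v = 0` and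
`div (v × ∇B) = ∇B · curl v = 0`, leaves `v · ∇α = (v × ∇B) · ∇(|v|⁻²)`; substituting
`|v|² = 2 (B - p)` turns this into the transport equation. It concerns `W / G` because `α` does not
change when `v` is multiplied by a nonvanishing function, and `W / G` is `α` for the field
`(1, β₂, β₃) = v / v₁`.
-/

open Filter Matrix Topology

local notation "ℝ³" => (Fin 3 → ℝ)

section VectorCalculus

/-- The gradient of a scalar function, as the vector of its partial derivatives (Mathlib's
`gradient` needs an inner product space, which `Fin 3 → ℝ` with its sup norm is not). -/
noncomputable def grad (f : ℝ³ → ℝ) (x : ℝ³) : ℝ³ :=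
  fun i => pd i f x

/-- The divergence of a vector field on `ℝ³`. -/
noncomputable def divergence (v : ℝ³ → ℝ³) (x : ℝ³) : ℝ :=
  ∑ i, pd i (v · i) x

/-- The curl of a vector field on `ℝ³`. -/
noncomputable def curl (v : ℝ³ → ℝ³) (x : ℝ³) : ℝ³ :=
  ![pd 1 (v · 2) x - pd 2 (v · 1) x,
    pd 2 (v · 0) x - pd 0 (v · 2) x,
    pd 0 (v · 1) x - pd 1 (v · 0) x]

/-- The convective acceleration `(v · ∇) v` of a velocity field on `ℝ³`. -/
noncomputable def convectiveAcceleration (v : ℝ³ → ℝ³) (x : ℝ³) : ℝ³ :=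
  fun i => v x ⬝ᵥ grad (v · i) x

variable {f g : ℝ³ → ℝ} {v w : ℝ³ → ℝ³} {x : ℝ³}

lemma pd_congr (h : f =ᶠ[𝓝 x] g) (i : Fin 3) : pd i f x = pd i g x := by
  rw [pd, pd, h.fderiv_eq]

lemma pd_const (c : ℝ) (i : Fin 3) : pd i (fun _ => c) x = 0 := by
  simp [pd]

lemma pd_add (hf : DifferentiableAt ℝ f x) (hg : DifferentiableAt ℝ g x) (i : Fin 3) :
    pd i (fun y => f y + g y) x = pd i f x + pd i g x := by
  simp [pd, fderiv_fun_add hf hg]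

lemma pd_sub (hf : DifferentiableAt ℝ f x) (hg : DifferentiableAt ℝ g x) (i : Fin 3) :
    pd i (fun y => f y - g y) x = pd i f x - pd i g x := by
  simp [pd, fderiv_fun_sub hf hg]

lemma pd_mul (hf : DifferentiableAt ℝ f x) (hg : DifferentiableAt ℝ g x) (i : Fin 3) :
    pd i (fun y => f y * g y) x = f x * pd i g x + g x * pd i f x := by
  simp [pd, fderiv_fun_mul hf hg]

lemma differentiableAt_fderiv (hf : ContDiffAt ℝ 2 f x) : DifferentiableAt ℝ (fderiv ℝ f) x :=
  (hf.fderiv_right (m := 1) (by norm_num)).differentiableAt one_ne_zero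

lemma differentiableAt_pd (hf : ContDiffAt ℝ 2 f x) (i : Fin 3) :
    DifferentiableAt ℝ (pd i f) x :=
  (differentiableAt_fderiv hf).clm_apply (differentiableAt_const _)

lemma pd_pd_comm (hf : ContDiffAt ℝ 2 f x) (i j : Fin 3) :
    pd i (pd j f) x = pd j (pd i f) x := by
  have pd_pd_eq (k l : Fin 3) :
      pd k (pd l f) x = fderiv ℝ (fderiv ℝ f) x (Pi.single k 1) (Pi.single l 1) := by
    change fderiv ℝ (fun y => fderiv ℝ f y (Pi.single l 1)) x (Pi.single k 1) = _
    simp [fderiv_clm_apply (differentiableAt_fderiv hf) (differentiableAt_const _)]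
  rw [pd_pd_eq, pd_pd_eq]
  exact hf.isSymmSndFDerivAt (by simp) _ _

lemma differentiableAt_grad (hf : ContDiffAt ℝ 2 f x) : DifferentiableAt ℝ (grad f) x :=
  differentiableAt_pi.2 (differentiableAt_pd hf)

lemma differentiableAt_curl (hv : ContDiffAt ℝ 2 v x) : DifferentiableAt ℝ (curl v) x := by
  have hpd (i j : Fin 3) := differentiableAt_pd (contDiffAt_pi.1 hv j) i
  refine differentiableAt_pi.2 fun i => ?_
  fin_cases i
  exacts [(hpd 1 2).sub (hpd 2 1), (hpd 2 0).sub (hpd 0 2), (hpd 0 1).sub (hpd 1 0)]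

lemma differentiableAt_dotProduct (hv : DifferentiableAt ℝ v x) (hw : DifferentiableAt ℝ w x) :
    DifferentiableAt ℝ (fun y => v y ⬝ᵥ w y) x := by
  simp only [dotProduct]
  fun_prop

lemma differentiableAt_cross (hv : DifferentiableAt ℝ v x) (hw : DifferentiableAt ℝ w x) :
    DifferentiableAt ℝ (fun y => v y ⨯₃ w y) x := by
  refine differentiableAt_pi.2 fun i => ?_
  fin_cases i <;> simp only [cross_apply, Fin.zero_eta, Fin.mk_one, Fin.reduceFinMk, cons_val] <;>
    fun_prop

lemma grad_congr (h : f =ᶠ[𝓝 x] g) : grad f x = grad g x :=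
  funext (pd_congr h)

lemma grad_inv (hf : DifferentiableAt ℝ f x) (hfx : f x ≠ 0) :
    grad (fun y => (f y)⁻¹) x = -((f x ^ 2)⁻¹ • grad f x) := by
  funext i
  have h := ((hasDerivAt_inv hfx).comp_hasFDerivAt x hf.hasFDerivAt).fderiv
  simp only [Function.comp_def] at h
  simp [grad, pd, h]

lemma divergence_congr (h : v =ᶠ[𝓝 x] w) : divergence v x = divergence w x :=
  Finset.sum_congr rfl fun i _ => pd_congr (h.fun_comp (· i)) i

lemma curl_congr (h : v =ᶠ[𝓝 x] w) : curl v x = curl w x := by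
  have hpd (i j : Fin 3) : pd i (v · j) x = pd i (w · j) x := pd_congr (h.fun_comp (· j)) i
  simp only [curl, hpd]

lemma divergence_add (hv : DifferentiableAt ℝ v x) (hw : DifferentiableAt ℝ w x) :
    divergence (fun y => v y + w y) x = divergence v x + divergence w x := by
  simp only [divergence, ← Finset.sum_add_distrib, Pi.add_apply]
  exact Finset.sum_congr rfl fun i _ => pd_add (by fun_prop) (by fun_prop) i

lemma divergence_smul (hf : DifferentiableAt ℝ f x) (hv : DifferentiableAt ℝ v x) :
    divergence (fun y => f y • v y) x = f x * divergence v x + v x ⬝ᵥ grad f x := by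
  simp only [divergence, dotProduct, grad, Finset.mul_sum, ← Finset.sum_add_distrib,
    Pi.smul_apply, smul_eq_mul]
  exact Finset.sum_congr rfl fun i _ => pd_mul hf (by fun_prop) i

lemma divergence_cross (hv : DifferentiableAt ℝ v x) (hw : DifferentiableAt ℝ w x) :
    divergence (fun y => v y ⨯₃ w y) x = w x ⬝ᵥ curl v x - v x ⬝ᵥ curl w x := by
  simp (discharger := fun_prop) only [divergence, Fin.sum_univ_three, cross_apply, curl,
    vec3_dotProduct, cons_val, pd_sub, pd_mul]
  ring

lemma divergence_curl (hv : ContDiffAt ℝ 2 v x) : divergence (curl v) x = 0 := by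
  have hpd (i j : Fin 3) := differentiableAt_pd (contDiffAt_pi.1 hv j) i
  have hcomm (i j k : Fin 3) := pd_pd_comm (contDiffAt_pi.1 hv k) i j
  simp only [divergence, Fin.sum_univ_three, curl, cons_val, pd_sub (hpd _ _) (hpd _ _)]
  rw [hcomm 0 1 2, hcomm 1 2 0, hcomm 2 0 1]
  ring

lemma curl_grad (hf : ContDiffAt ℝ 2 f x) : curl (grad f) x = 0 := by
  have hcomm (i j : Fin 3) : pd i (grad f · j) x - pd j (grad f · i) x = 0 :=
    sub_eq_zero.2 (pd_pd_comm hf i j)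
  simp [curl, hcomm]

lemma curl_smul (hf : DifferentiableAt ℝ f x) (hv : DifferentiableAt ℝ v x) :
    curl (fun y => f y • v y) x = f x • curl v x + grad f x ⨯₃ v x := by
  have hpd (i j : Fin 3) :
      pd i (fun y => f y * v y j) x = f x * pd i (v · j) x + v x j * pd i f x :=
    pd_mul hf (by fun_prop) i
  funext i
  fin_cases i <;> simp [curl, cross_apply, grad, hpd] <;> ring

lemma grad_dotProduct_self (hv : DifferentiableAt ℝ v x) :
    grad (fun y => v y ⬝ᵥ v y) x =
      (2 : ℝ) • (convectiveAcceleration v x + v x ⨯₃ curl v x) := by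
  funext i
  simp (discharger := fun_prop) only [grad, vec3_dotProduct, pd_add, pd_mul]
  rw [Pi.smul_apply, Pi.add_apply]
  fin_cases i <;>
    simp [convectiveAcceleration, grad, vec3_dotProduct, cross_apply, curl] <;> ring

end VectorCalculus

section Abnormality

/-- The abnormality `v · curl v / |v|²` of a vector field, which measures the failure of its
orthogonal planes to be tangent to a family of surfaces. At zeros of `v` it has the junk value
`0`. -/
noncomputable def abnormality (v : ℝ³ → ℝ³) (x : ℝ³) : ℝ :=
  (v x ⬝ᵥ curl v x) / (v x ⬝ᵥ v x)

variable {f B : ℝ³ → ℝ} {v w : ℝ³ → ℝ³} {x : ℝ³}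

lemma abnormality_congr (h : v =ᶠ[𝓝 x] w) : abnormality v x = abnormality w x := by
  rw [abnormality, abnormality, curl_congr h, h.eq_of_nhds]

lemma abnormality_smul (hf : DifferentiableAt ℝ f x) (hv : DifferentiableAt ℝ v x)
    (hfx : f x ≠ 0) : abnormality (fun y => f y • v y) x = abnormality v x := by
  simp only [abnormality, curl_smul hf hv, dotProduct_add, smul_dotProduct, dotProduct_smul,
    dot_cross_self, smul_eq_mul, mul_zero, add_zero]
  rw [mul_div_mul_left _ _ hfx, mul_div_mul_left _ _ hfx]

lemma differentiableAt_abnormality (hv : ContDiffAt ℝ 2 v x) (hvx : v x ≠ 0) :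
    DifferentiableAt ℝ (abnormality v) x := by
  have hv' : DifferentiableAt ℝ v x := hv.differentiableAt two_ne_zero
  change DifferentiableAt ℝ (fun y => (v y ⬝ᵥ curl v y) / (v y ⬝ᵥ v y)) x
  have hnum := differentiableAt_dotProduct hv' (differentiableAt_curl hv)
  have hden := differentiableAt_dotProduct hv' hv'
  have hden_ne : v x ⬝ᵥ v x ≠ 0 := dotProduct_self_eq_zero.not.2 hvx
  fun_prop (disch := exact hden_ne)

lemma abnormality_smul_self (hvx : v x ≠ 0) :
    abnormality v x • v x =
      curl v x + (v x ⬝ᵥ v x)⁻¹ • (v x ⨯₃ (v x ⨯₃ curl v x)) := by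
  have hq : v x ⬝ᵥ v x ≠ 0 := dotProduct_self_eq_zero.not.2 hvx
  rw [cross_cross_eq_smul_sub_smul', smul_sub, smul_smul, smul_smul, inv_mul_cancel₀ hq, one_smul,
    add_sub_cancel, abnormality, div_eq_inv_mul]

theorem dotProduct_grad_abnormality (hv : ContDiffAt ℝ 2 v x) (hB : ContDiffAt ℝ 2 B x)
    (hvx : v x ≠ 0) (hdiv : divergence v x = 0)
    (hlamb : ∀ᶠ y in 𝓝 x, grad B y = v y ⨯₃ curl v y) :
    v x ⬝ᵥ grad (abnormality v) x =
      -(((v x ⬝ᵥ v x) ^ 2)⁻¹ * ((v x ⨯₃ grad B x) ⬝ᵥ grad (fun y => v y ⬝ᵥ v y) x)) := by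
  have hv' : DifferentiableAt ℝ v x := hv.differentiableAt two_ne_zero
  have hq : v x ⬝ᵥ v x ≠ 0 := dotProduct_self_eq_zero.not.2 hvx
  have hq' : DifferentiableAt ℝ (fun y => v y ⬝ᵥ v y) x := differentiableAt_dotProduct hv' hv'
  have hcross : DifferentiableAt ℝ (fun y => v y ⨯₃ grad B y) x :=
    differentiableAt_cross hv' (differentiableAt_grad hB)
  have hfield : (fun y => abnormality v y • v y) =ᶠ[𝓝 x]
      fun y => curl v y + (v y ⬝ᵥ v y)⁻¹ • (v y ⨯₃ grad B y) := by
    filter_upwards [hlamb, hv.continuousAt.eventually_ne hvx] with y hy hvy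
    rw [hy, abnormality_smul_self hvy]
  have hdivcross : divergence (fun y => v y ⨯₃ grad B y) x = 0 := by
    rw [divergence_cross hv' (differentiableAt_grad hB), curl_grad hB, hlamb.self_of_nhds,
      dotProduct_zero, sub_zero, dotProduct_comm, dot_cross_self]
  calc v x ⬝ᵥ grad (abnormality v) x
      = divergence (fun y => abnormality v y • v y) x := by
        rw [divergence_smul (differentiableAt_abnormality hv hvx) hv', hdiv, mul_zero, zero_add]
    _ = divergence (fun y => curl v y + (v y ⬝ᵥ v y)⁻¹ • (v y ⨯₃ grad B y)) x :=
        divergence_congr hfield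
    _ = (v x ⨯₃ grad B x) ⬝ᵥ grad (fun y => (v y ⬝ᵥ v y)⁻¹) x := by
        rw [divergence_add (differentiableAt_curl hv) ((hq'.fun_inv hq).fun_smul hcross),
          divergence_curl hv, divergence_smul (hq'.fun_inv hq) hcross, hdivcross, mul_zero,
          zero_add, zero_add]
    _ = _ := by
        rw [grad_inv hq' hq, dotProduct_neg, dotProduct_smul, smul_eq_mul]

end Abnormality

section SlopeField

/-- The field `(1, v₂ / v₁, v₃ / v₁)`, which has the field lines of `v` parametrized by the first
coordinate; division by zero makes it `(1, 0, 0)` where `v₁` vanishes. -/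
noncomputable def slopeField (v : ℝ³ → ℝ³) (x : ℝ³) : ℝ³ :=
  ![1, v x 1 / v x 0, v x 2 / v x 0]

variable {f β₂ β₃ : ℝ³ → ℝ} {v : ℝ³ → ℝ³} {x : ℝ³}

lemma smul_slopeField (hvx : v x 0 ≠ 0) : v x 0 • slopeField v x = v x := by
  funext i
  fin_cases i <;> simp [slopeField, mul_div_cancel₀, hvx]

lemma differentiableAt_slopeField (hv : DifferentiableAt ℝ v x) (hvx : v x 0 ≠ 0) :
    DifferentiableAt ℝ (slopeField v) x := by
  refine differentiableAt_pi.2 fun i => ?_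
  fin_cases i <;> simp only [slopeField, Fin.zero_eta, Fin.mk_one, Fin.reduceFinMk, cons_val] <;>
    fun_prop (disch := exact hvx)

lemma abnormality_slopeField (hv : DifferentiableAt ℝ v x) (hvx : v x 0 ≠ 0) :
    abnormality (slopeField v) x = abnormality v x := by
  have hv0 : DifferentiableAt ℝ (v · 0) x := by fun_prop
  have hsmul : (fun y => v y 0 • slopeField v y) =ᶠ[𝓝 x] v := by
    filter_upwards [hv0.continuousAt.eventually_ne hvx] with y hy
    exact smul_slopeField hy
  rw [← abnormality_congr hsmul, abnormality_smul hv0 (differentiableAt_slopeField hv hvx) hvx]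

lemma grad_abnormality_slopeField (hv : ContDiffAt ℝ 2 v x) (hvx : v x 0 ≠ 0) :
    grad (abnormality (slopeField v)) x = grad (abnormality v) x := by
  have hv0 : ContinuousAt (v · 0) x := (contDiffAt_pi.1 hv 0).continuousAt
  apply grad_congr
  filter_upwards [hv.eventually (by simp), hv0.eventually_ne hvx] with y hvy hvy0
  exact abnormality_slopeField (hvy.differentiableAt two_ne_zero) hvy0

lemma Dop_eq_dotProduct_grad :
    Dop β₂ β₃ f x = ![1, β₂ x, β₃ x] ⬝ᵥ grad f x := by
  simp only [Dop, grad, vec3_dotProduct, cons_val, one_mul]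

lemma abnormality_cons_one :
    abnormality (fun y => ![1, β₂ y, β₃ y]) x =
      (pd 1 β₃ x - pd 2 β₂ x + β₃ x * pd 0 β₂ x - β₂ x * pd 0 β₃ x) /
        (1 + β₂ x ^ 2 + β₃ x ^ 2) := by
  simp only [abnormality, curl, vec3_dotProduct, cons_val, pd_const]
  ring

end SlopeField

section Euler

/-- The Bernoulli function `|v|² / 2 + p` of a velocity field `v` and a pressure `p`. -/
noncomputable def bernoulliFunction (v : ℝ³ → ℝ³) (p : ℝ³ → ℝ) (x : ℝ³) : ℝ :=
  (v x ⬝ᵥ v x) / 2 + p x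

variable {p : ℝ³ → ℝ} {v : ℝ³ → ℝ³} {x : ℝ³}

lemma grad_bernoulliFunction (hv : DifferentiableAt ℝ v x) (hp : DifferentiableAt ℝ p x) :
    grad (bernoulliFunction v p) x =
      (2⁻¹ : ℝ) • grad (fun y => v y ⬝ᵥ v y) x + grad p x := by
  have hq : DifferentiableAt ℝ (fun y => v y ⬝ᵥ v y) x := differentiableAt_dotProduct hv hv
  have hB : bernoulliFunction v p = fun y => 2⁻¹ * (v y ⬝ᵥ v y) + p y := by
    funext y
    rw [bernoulliFunction, div_eq_inv_mul]
  funext i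
  simp [grad, hB, pd_add (hq.const_mul _) hp, pd_mul (differentiableAt_const _) hq, pd_const]

lemma grad_bernoulliFunction_of_momentum (hv : DifferentiableAt ℝ v x)
    (hp : DifferentiableAt ℝ p x) (hmom : convectiveAcceleration v x + grad p x = 0) :
    grad (bernoulliFunction v p) x = v x ⨯₃ curl v x := by
  rw [grad_bernoulliFunction hv hp, grad_dotProduct_self hv, inv_smul_smul₀ two_ne_zero,
    add_right_comm, hmom, zero_add]

lemma contDiffAt_bernoulliFunction (hv : ContDiffAt ℝ 2 v x) (hp : ContDiffAt ℝ 2 p x) :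
    ContDiffAt ℝ 2 (bernoulliFunction v p) x := by
  have hvi := contDiffAt_pi.1 hv
  exact ((ContDiffAt.sum fun i _ => (hvi i).mul (hvi i)).div_const 2).add hp

theorem dotProduct_grad_abnormality_of_euler (hv : ContDiffAt ℝ 2 v x) (hp : ContDiffAt ℝ 2 p x)
    (hvx : v x ≠ 0) (hdiv : divergence v x = 0)
    (hmom : ∀ᶠ y in 𝓝 x, convectiveAcceleration v y + grad p y = 0) :
    v x ⬝ᵥ grad (abnormality v) x =
      -(2 / (v x ⬝ᵥ v x) ^ 2 * (v x ⬝ᵥ grad p x ⨯₃ grad (bernoulliFunction v p) x)) := by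
  have hB := contDiffAt_bernoulliFunction hv hp
  have hlamb : ∀ᶠ y in 𝓝 x, grad (bernoulliFunction v p) y = v y ⨯₃ curl v y := by
    filter_upwards [hmom, hv.eventually (by simp), hp.eventually (by simp)] with y hy hvy hpy
    exact grad_bernoulliFunction_of_momentum (hvy.differentiableAt two_ne_zero)
      (hpy.differentiableAt two_ne_zero) hy
  have hgradq : grad (fun y => v y ⬝ᵥ v y) x =
      (2 : ℝ) • (grad (bernoulliFunction v p) x - grad p x) := by
    rw [grad_bernoulliFunction (hv.differentiableAt two_ne_zero) (hp.differentiableAt two_ne_zero),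
      add_sub_cancel_right, smul_inv_smul₀ two_ne_zero]
  have htriple (a b c : ℝ³) : (a ⨯₃ b) ⬝ᵥ (b - c) = a ⬝ᵥ c ⨯₃ b := by
    rw [dotProduct_sub, dotProduct_comm, dot_cross_self, zero_sub, dotProduct_comm,
      ← cross_anticomm b a, dotProduct_neg, neg_neg, triple_product_permutation,
      triple_product_permutation]
  rw [dotProduct_grad_abnormality hv hB hvx hdiv hlamb, hgradq, dotProduct_smul, htriple,
    smul_eq_mul]
  ring

lemma slopeField_dotProduct_grad_abnormality_of_euler (hv : ContDiffAt ℝ 2 v x)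
    (hp : ContDiffAt ℝ 2 p x) (hvx : v x 0 ≠ 0) (hdiv : divergence v x = 0)
    (hmom : ∀ᶠ y in 𝓝 x, convectiveAcceleration v y + grad p y = 0) :
    slopeField v x ⬝ᵥ grad (abnormality (slopeField v)) x +
      1 / (2 * (bernoulliFunction v p x - p x) ^ 2) *
        (slopeField v x ⬝ᵥ grad p x ⨯₃ grad (bernoulliFunction v p) x) = 0 := by
  have hvx' : v x ≠ 0 := fun h => hvx (by rw [h, Pi.zero_apply])
  have hkinetic : 1 / (2 * (bernoulliFunction v p x - p x) ^ 2) = 2 / (v x ⬝ᵥ v x) ^ 2 := by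
    rw [bernoulliFunction, add_sub_cancel_right]
    field_simp
  have hscale (a : ℝ³) : v x ⬝ᵥ a = v x 0 * (slopeField v x ⬝ᵥ a) := by
    rw [← smul_eq_mul, ← smul_dotProduct, smul_slopeField hvx]
  have htransport := dotProduct_grad_abnormality_of_euler hv hp hvx' hdiv hmom
  rw [hscale, hscale (grad p x ⨯₃ _)] at htransport
  rw [hkinetic, grad_abnormality_slopeField hv hvx]
  apply mul_left_cancel₀ hvx
  linear_combination htransport

theorem incompressible_transport_equation_for_W_general
    (U : Set (Fin 3 → ℝ)) (hU : IsOpen U)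
    (u : Fin 3 → (Fin 3 → ℝ) → ℝ) (p : (Fin 3 → ℝ) → ℝ)
    (hu : ∀ i, ContDiffOn ℝ 2 (u i) U) (hp : ContDiffOn ℝ 2 p U)
    (hu1 : ∀ x ∈ U, u 0 x ≠ 0)
    (hdiv : ∀ x ∈ U, pd 0 (u 0) x + pd 1 (u 1) x + pd 2 (u 2) x = 0)
    (hmom : ∀ i : Fin 3, ∀ x ∈ U,
      u 0 x * pd 0 (u i) x + u 1 x * pd 1 (u i) x + u 2 x * pd 2 (u i) x
        + pd i p x = 0)
    (β₂ β₃ B G W : (Fin 3 → ℝ) → ℝ)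
    (hβ₂ : β₂ = fun y => u 1 y / u 0 y) (hβ₃ : β₃ = fun y => u 2 y / u 0 y)
    (hB : B = fun y => (u 0 y ^ 2 + u 1 y ^ 2 + u 2 y ^ 2) / 2 + p y)
    (hG : G = fun y => 1 + β₂ y ^ 2 + β₃ y ^ 2)
    (hW : W = fun y => pd 1 β₃ y - pd 2 β₂ y + β₃ y * pd 0 β₂ y - β₂ y * pd 0 β₃ y) :
    (∀ x ∈ U,
      Dop β₂ β₃ (fun y => W y / G y) x
        + 1 / (2 * (B x - p x) ^ 2) *
          ((pd 1 p x * pd 2 B x - pd 2 p x * pd 1 B x)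
            + β₂ x * (pd 2 p x * pd 0 B x - pd 0 p x * pd 2 B x)
            + β₃ x * (pd 0 p x * pd 1 B x - pd 1 p x * pd 0 B x)) = 0) ∧
    ((∃ B₀ : ℝ, ∀ x ∈ U, B x = B₀) →
      ∀ x ∈ U, Dop β₂ β₃ (fun y => W y / G y) x = 0) := by
  set v : ℝ³ → ℝ³ := fun y i => u i y
  have hBern : B = bernoulliFunction v p := by
    funext y
    simp only [hB, bernoulliFunction, v, vec3_dotProduct, pow_two]
  have hslope : slopeField v = fun y => ![1, β₂ y, β₃ y] := by
    rw [hβ₂, hβ₃]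
    rfl
  have hWG : (fun y => W y / G y) = abnormality (slopeField v) := by
    funext y
    rw [hslope, abnormality_cons_one, hW, hG]
  have htransport : ∀ x ∈ U, Dop β₂ β₃ (fun y => W y / G y) x +
      1 / (2 * (B x - p x) ^ 2) * (![1, β₂ x, β₃ x] ⬝ᵥ grad p x ⨯₃ grad B x) = 0 := fun x hx => by
    have hUx := hU.mem_nhds hx
    have hv : ContDiffAt ℝ 2 v x := contDiffAt_pi.2 fun i => (hu i).contDiffAt hUx
    have hdiv' : divergence v x = 0 := by
      simpa only [divergence, Fin.sum_univ_three] using hdiv x hx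
    have hmom' : ∀ᶠ y in 𝓝 x, convectiveAcceleration v y + grad p y = 0 := by
      filter_upwards [hUx] with y hy
      funext i
      simpa only [Pi.add_apply, convectiveAcceleration, grad, vec3_dotProduct,
        Pi.zero_apply] using hmom i y hy
    rw [Dop_eq_dotProduct_grad, hWG, hBern, ← congrFun hslope x]
    exact slopeField_dotProduct_grad_abnormality_of_euler hv (hp.contDiffAt hUx) (hu1 x hx)
      hdiv' hmom'
  refine ⟨fun x hx => ?_, fun ⟨B₀, hB₀⟩ x hx => ?_⟩
  · simpa only [cross_apply, vec3_dotProduct, cons_val, grad, one_mul] using htransport x hx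
  · have hgradB : grad B x = 0 := by
      rw [grad_congr (eventually_of_mem (hU.mem_nhds hx) hB₀)]
      exact funext (pd_const B₀)
    simpa only [hgradB, map_zero, dotProduct_zero, mul_zero, add_zero] using htransport x hx

end Euler

/-- the transport equation (5.16) for `W/G` for a smooth
incompressible Euler flow with `u₁ > 0`; in particular `D(W/G) = 0` when
the Bernoulli function is constant. -/
theorem incompressible_transport_equation_for_W
    (U : Set (Fin 3 → ℝ)) (hU : IsOpen U)
    (u : Fin 3 → (Fin 3 → ℝ) → ℝ) (p : (Fin 3 → ℝ) → ℝ)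
    (hu : ∀ i, ContDiffOn ℝ (⊤ : ℕ∞) (u i) U) (hp : ContDiffOn ℝ (⊤ : ℕ∞) p U)
    (hu1pos : ∀ x ∈ U, 0 < u 0 x)
    (hdiv : ∀ x ∈ U, pd 0 (u 0) x + pd 1 (u 1) x + pd 2 (u 2) x = 0)
    (hmom : ∀ i : Fin 3, ∀ x ∈ U,
      u 0 x * pd 0 (u i) x + u 1 x * pd 1 (u i) x + u 2 x * pd 2 (u i) x
        + pd i p x = 0)
    (β₂ β₃ B G W : (Fin 3 → ℝ) → ℝ)
    (hβ₂ : β₂ = fun y => u 1 y / u 0 y) (hβ₃ : β₃ = fun y => u 2 y / u 0 y)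
    (hB : B = fun y => (u 0 y ^ 2 + u 1 y ^ 2 + u 2 y ^ 2) / 2 + p y)
    (hG : G = fun y => 1 + β₂ y ^ 2 + β₃ y ^ 2)
    (hW : W = fun y => pd 1 β₃ y - pd 2 β₂ y + β₃ y * pd 0 β₂ y - β₂ y * pd 0 β₃ y) :
    (∀ x ∈ U,
      Dop β₂ β₃ (fun y => W y / G y) x
        + 1 / (2 * (B x - p x) ^ 2) *
          ((pd 1 p x * pd 2 B x - pd 2 p x * pd 1 B x)
            + β₂ x * (pd 2 p x * pd 0 B x - pd 0 p x * pd 2 B x)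
            + β₃ x * (pd 0 p x * pd 1 B x - pd 1 p x * pd 0 B x)) = 0) ∧
    ((∃ B₀ : ℝ, ∀ x ∈ U, B x = B₀) →
      ∀ x ∈ U, Dop β₂ β₃ (fun y => W y / G y) x = 0) :=
  incompressible_transport_equation_for_W_general U hU u p
    (fun i => (hu i).of_le (WithTop.coe_le_coe.2 (le_top : (2 : ℕ∞) ≤ ⊤)))
    (hp.of_le (WithTop.coe_le_coe.2 (le_top : (2 : ℕ∞) ≤ ⊤))) (fun x hx => (hu1pos x hx).ne')
    hdiv hmom β₂ β₃ B G W hβ₂ hβ₃ hB hG hW
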